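/- Let ε > 0, η₀ > 0, δ > 0 and C₀ > 0 be fixed, and set V = {ξ ∈ ℝ : |ξ − η₀| ≤ δ}. Then for all sufficiently large t₀ > 0 there exists a function f ∈ C_c^∞((0,∞)) such that: (1) ∫_{ℝ∖V} |f̂(ξ)| dξ ≤ ε/C₀; (2) ∫_ℝ |f̂(ξ)| dξ ≤ 2√(2π); (3) |f(t₀)| = 1. -/

import Mathlib

open Complex Filter Topology MeasureTheory

noncomputable section

/-- `C^∞` functions with compact support contained in `(0, ∞)`. -/
def IsTestPlus (g : ℝ → ℂ) : Prop :=
  ContDiff ℝ (⊤ : ℕ∞) g ∧ HasCompactSupport g ∧ tsupport g ⊆ Set.Ioi (0 : ℝ)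

/-- The Fourier transformation `(𝓕 f)(ξ) = (2π)^{-1/2} ∫ f x e^{-iξx} dx`. -/
def FT (f : ℝ → ℂ) : ℝ → ℂ :=
  fun ξ => (Real.sqrt (2 * Real.pi))⁻¹ •
    ∫ x : ℝ, Complex.exp (-(Complex.I * (ξ : ℂ) * (x : ℂ))) • f x

open FourierTransform Convolution in
theorem base_exists : ∃ (φ : ℝ → ℂ) (c : ℝ), 0 < c ∧ ContDiff ℝ (⊤ : ℕ∞) φ ∧ HasCompactSupport φ ∧
    φ 0 = (c : ℂ) ∧ Integrable (fun w => ‖𝓕 φ w‖) ∧ ∫ w, ‖𝓕 φ w‖ = c := by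
  let b : ContDiffBump (0 : ℝ) := ⟨1, 2, by norm_num, by norm_num⟩
  let g : ℝ → ℂ := fun x => ((b x : ℝ) : ℂ)
  have hg : ContDiff ℝ (⊤ : ℕ∞) g := Complex.ofRealCLM.contDiff.comp b.contDiff
  have hgc : HasCompactSupport g := b.hasCompactSupport.comp_left (g := fun x : ℝ => (x : ℂ)) (by simp)
  let G := hgc.toSchwartzMap hg
  have hGg : (G : ℝ → ℂ) = g := rfl
  have hgi : Integrable g := hGg ▸ G.integrable
  have hF : ∀ w, ‖𝓕 (g ⋆[ContinuousLinearMap.mul ℂ ℂ] g) w‖ = ‖(𝓕 G) w‖ ^ 2 := by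
    intro w
    rw [Real.fourier_mul_convolution_eq hgi hgi, SchwartzMap.fourier_coe, hGg, norm_mul, sq]
  have hpl := SchwartzMap.integral_norm_sq_fourier G
  have hgn : ∀ x, ‖G x‖ ^ 2 = b x ^ 2 := by
    intro x
    rw [hGg]; simp [g]
  have hbc : Continuous (fun x => b x ^ 2) := by have := b.continuous; fun_prop
  refine ⟨g ⋆[ContinuousLinearMap.mul ℂ ℂ] g, ∫ x, b x ^ 2, ?_, ?_, ?_, ?_, ?_, ?_⟩
  · refine hbc.integral_pos_of_hasCompactSupport_nonneg_nonzero (x := 0) ?_ (fun x => by positivity) ?_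
    · exact b.hasCompactSupport.comp_left (g := fun x : ℝ => x ^ 2) (by simp)
    · have : b 0 = 1 := b.one_of_mem_closedBall (by simp [b])
      simp [this]
  · exact hgc.contDiff_convolution_right (ContinuousLinearMap.mul ℝ ℂ) hgi.locallyIntegrable hg
  · exact hgc.convolution _ hgc
  · rw [convolution_def, ← integral_complex_ofReal]
    congr 1; ext x
    simp [g, b.neg, sq]
  · simp_rw [hF]
    exact (MeasureTheory.memLp_two_iff_integrable_sq_norm (𝓕 G).continuous.aestronglyMeasurable).1
      ((𝓕 G).memLp 2)
  · simp_rw [hF, hpl, hgn]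

open FourierTransform Convolution in
theorem FT_norm (φ : ℝ → ℂ) (c η R t₀ ξ : ℝ) (hc : 0 < c) (hR : 0 < R) :
    ‖FT (fun x => (c : ℂ)⁻¹ * cexp (I * η * x) * φ ((x - t₀) / R)) ξ‖ =
      (Real.sqrt (2 * Real.pi))⁻¹ * R * c⁻¹ * ‖𝓕 φ (R / (2 * Real.pi) * (ξ - η))‖ := by
  unfold FT
  set F : ℝ → ℂ := fun x => cexp (-(I * (ξ : ℂ) * (x : ℂ))) •
    ((c : ℂ)⁻¹ * cexp (I * η * x) * φ ((x - t₀) / R)) with hF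
  have h1 : ∫ x, F x = R • ∫ u, F (R * u + t₀) := by
    rw [Measure.integral_comp_mul_left (fun y => F (y + t₀)) R, integral_add_right_eq_self F,
      abs_of_pos (by positivity), smul_smul, mul_inv_cancel₀ hR.ne', one_smul]
  have h2 : ∀ u, F (R * u + t₀) = ((c : ℂ)⁻¹ * cexp ((((η - ξ) * t₀ : ℝ) : ℂ) * I)) *
      (Real.fourierChar (-(u * (R / (2 * Real.pi) * (ξ - η)))) • φ u) := by
    intro u
    have e : (R * u + t₀ - t₀) / R = u := by field_simp; ring
    simp only [hF, e, smul_eq_mul, Circle.smul_def, Real.fourierChar_apply]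
    have e2 : ∀ a b c d k p : ℂ, a * b = c * d → a * (k * b * p) = k * c * (d * p) := by
      intro a b c d k p h
      linear_combination k * p * h
    apply e2
    rw [← Complex.exp_add, ← Complex.exp_add]
    congr 1
    have : (Real.pi : ℂ) ≠ 0 := by exact_mod_cast Real.pi_ne_zero
    push_cast
    field_simp
    ring
  rw [h1]
  simp_rw [h2]
  rw [integral_const_mul, ← Real.fourier_real_eq, norm_smul, norm_smul, norm_mul, norm_mul,
    Complex.norm_exp_ofReal_mul_I]
  simp [abs_of_pos hc, abs_of_pos hR, abs_of_nonneg (Real.sqrt_nonneg _)]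
  ring

theorem subst_int (H : ℝ → ℝ) (a η : ℝ) (ha : 0 < a) :
    ∫ ξ, H (a * (ξ - η)) = a⁻¹ * ∫ w, H w := by
  rw [integral_sub_right_eq_self (fun x => H (a * x)) η, Measure.integral_comp_mul_left,
    abs_of_pos (by positivity), smul_eq_mul]

theorem tail_small (H : ℝ → ℝ) (hH : Integrable H) (hH0 : ∀ w, 0 ≤ H w) (e : ℝ) (he : 0 < e) :
    ∃ A : ℝ, 0 < A ∧ ∫ w, {w : ℝ | A < |w|}.indicator H w ≤ e := by
  have : Tendsto (fun A : ℝ => ∫ w, {w : ℝ | A < |w|}.indicator H w) atTop (𝓝 (∫ w : ℝ, (0 : ℝ))) := by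
    apply tendsto_integral_filter_of_dominated_convergence H
    · refine Eventually.of_forall fun A => hH.aestronglyMeasurable.indicator ?_
      exact measurableSet_lt measurable_const (by fun_prop)
    · refine Eventually.of_forall fun A => Eventually.of_forall fun w => ?_
      refine (norm_indicator_le_norm_self _ _).trans ?_
      rw [Real.norm_of_nonneg (hH0 w)]
    · exact hH
    · refine Eventually.of_forall fun w => ?_
      apply tendsto_const_nhds.congr'
      filter_upwards [eventually_ge_atTop |w|] with A hA
      rw [Set.indicator_of_notMem]
      simpa using hA
  rw [integral_zero] at this
  obtain ⟨A, h1, h2⟩ := ((this.eventually (eventually_le_nhds he)).and (eventually_gt_atTop 0)).exists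
  exact ⟨A, h2, h1⟩

open FourierTransform Convolution in
/-- The cut-off lemma: given `ε, η₀, δ, C₀ > 0` and
`V = {ξ : |ξ - η₀| ≤ δ}`, for every sufficiently large `t₀ > 0` there is
`f ∈ C_c^∞((0,∞))` with `∫_{ℝ∖V} |f̂| ≤ ε/C₀`, `∫_ℝ |f̂| ≤ 2√(2π)` and `|f t₀| = 1`. -/
theorem cutoff_lemma (ε η₀ δ C₀ : ℝ) (hε : 0 < ε) (hη : 0 < η₀) (hδ : 0 < δ)
    (hC : 0 < C₀) :
    ∃ M : ℝ, 0 < M ∧ ∀ t₀ : ℝ, M ≤ t₀ → ∃ f : ℝ → ℂ, IsTestPlus f ∧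
      (∫ ξ in {ξ : ℝ | δ < |ξ - η₀|}, ‖FT f ξ‖) ≤ ε / C₀ ∧
      (∫ ξ : ℝ, ‖FT f ξ‖) ≤ 2 * Real.sqrt (2 * Real.pi) ∧
      ‖f t₀‖ = 1 := by
  obtain ⟨φ, c, hc, hφ, hφc, hφ0, hi, hint⟩ := base_exists
  set H : ℝ → ℝ := fun w => ‖𝓕 φ w‖ with hH
  have hs : 0 < Real.sqrt (2 * Real.pi) := by positivity
  have hs2 : Real.sqrt (2 * Real.pi) * Real.sqrt (2 * Real.pi) = 2 * Real.pi :=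
    Real.mul_self_sqrt (by positivity)
  obtain ⟨A, hA, hAt⟩ := tail_small H hi (fun w => norm_nonneg _)
    (ε / C₀ * c / Real.sqrt (2 * Real.pi)) (by positivity)
  obtain ⟨B, hB, hBs⟩ := hφc.isCompact.isBounded.exists_pos_norm_lt
  obtain ⟨R, hR, hRA⟩ : ∃ R : ℝ, 0 < R ∧ R / (2 * Real.pi) * δ = A :=
    ⟨2 * Real.pi * A / δ, by positivity, by field_simp⟩
  have ha : 0 < R / (2 * Real.pi) := by positivity
  have hconst : (Real.sqrt (2 * Real.pi))⁻¹ * R * c⁻¹ * (R / (2 * Real.pi))⁻¹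
      = Real.sqrt (2 * Real.pi) / c := by
    field_simp
    rw [sq, hs2]
  refine ⟨2 * (R * B), by positivity, fun t₀ ht₀ => ?_⟩
  have hsupp : tsupport (fun x : ℝ => (c : ℂ)⁻¹ * cexp (I * η₀ * x) * φ ((x - t₀) / R)) ⊆
      Set.Icc (t₀ - R * B) (t₀ + R * B) := by
    apply closure_minimal _ isClosed_Icc
    intro x hx
    have h1 : φ ((x - t₀) / R) ≠ 0 := fun h => hx (by simp [h])
    have h2 := hBs _ (subset_tsupport _ h1)
    rw [Real.norm_eq_abs, abs_div, abs_of_pos hR, div_lt_iff₀ hR, abs_lt] at h2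
    constructor <;> linarith
  refine ⟨fun x => (c : ℂ)⁻¹ * cexp (I * η₀ * x) * φ ((x - t₀) / R), ⟨?_, ?_, ?_⟩, ?_, ?_, ?_⟩
  · have h1 : ContDiff ℝ (⊤ : ℕ∞) (fun x : ℝ => (x : ℂ)) := Complex.ofRealCLM.contDiff
    have h2 : ContDiff ℝ (⊤ : ℕ∞) (fun x : ℝ => φ ((x - t₀) / R)) :=
      hφ.comp (by fun_prop)
    exact (contDiff_const.mul (contDiff_const.mul h1).cexp).mul h2
  · exact isCompact_Icc.of_isClosed_subset (isClosed_tsupport _) hsupp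
  · refine hsupp.trans fun x hx => ?_
    have : 0 < R * B := by positivity
    simp only [Set.mem_Icc, Set.mem_Ioi] at hx ⊢
    linarith [hx.1]
  · rw [← integral_indicator (measurableSet_lt measurable_const (by fun_prop))]
    have : ∀ ξ, {ξ : ℝ | δ < |ξ - η₀|}.indicator (fun ξ => ‖FT (fun x : ℝ => (c : ℂ)⁻¹ *
        cexp (I * η₀ * x) * φ ((x - t₀) / R)) ξ‖) ξ = (Real.sqrt (2 * Real.pi))⁻¹ * R * c⁻¹ *
        {w : ℝ | A < |w|}.indicator H (R / (2 * Real.pi) * (ξ - η₀)) := by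
      intro ξ
      have hiff : A < |R / (2 * Real.pi) * (ξ - η₀)| ↔ δ < |ξ - η₀| := by
        rw [abs_mul, abs_of_pos ha, ← hRA, mul_lt_mul_iff_right₀ ha]
      by_cases h : δ < |ξ - η₀|
      · rw [Set.indicator_of_mem (by exact h), Set.indicator_of_mem (by exact hiff.2 h),
          FT_norm φ c η₀ R t₀ ξ hc hR]
      · rw [Set.indicator_of_notMem (by exact h),
          Set.indicator_of_notMem (by exact fun h' => h (hiff.1 h')), mul_zero]
    simp_rw [this]
    rw [integral_const_mul, subst_int _ _ _ ha, ← mul_assoc, hconst]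
    calc _ ≤ Real.sqrt (2 * Real.pi) / c * (ε / C₀ * c / Real.sqrt (2 * Real.pi)) := by gcongr
      _ = ε / C₀ := by field_simp
  · simp_rw [FT_norm φ c η₀ R t₀ _ hc hR]
    rw [integral_const_mul, subst_int H _ _ ha, ← mul_assoc, hconst, hint, div_mul_cancel₀ _ hc.ne']
    linarith
  · have : cexp (I * η₀ * t₀) = cexp ((η₀ * t₀ : ℝ) * I) := by push_cast; ring_nf
    simp only [sub_self, zero_div, hφ0, norm_mul, this, Complex.norm_exp_ofReal_mul_I]
    simp [hc.ne']
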